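/- Let n ≥ 2 be an integer and g ∈ F_q[t] a nonzero polynomial with exactly r distinct monic irreducible divisors. Then |∑_{f monic, deg f = n, gcd(f,g)=1} μ(f)| ≤ (q + 1) · C(n + r − 1, n), where C(·,·) denotes a binomial coefficient (equivalently, the sum of μ(f)χ₀(f) over monic f of degree n, where χ₀ is the trivial character modulo R_{s,g} extended by zero to polynomials not coprime to g). -/

import Mathlib

/-!
Common setup: `F_q((1/t))` is realized as `LaurentSeries Fq` (formal Laurent series in `X`)
under the identification `X = 1/t`; thus the coefficient of `t^i` is the coefficient of
`X^(-i)`, and `𝕋` consists of series supported on positive powers of `X`.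
-/

open Polynomial
open scoped Classical

/-- The element `t` of `F_q((1/t))`, i.e. the Laurent series `X⁻¹`. -/
noncomputable def tElem (Fq : Type) [Field Fq] : LaurentSeries Fq :=
  HahnSeries.single (-1 : ℤ) 1

/-- The natural embedding of `F_q[t]` into `F_q((1/t))`: evaluate the polynomial at `t`. -/
noncomputable def toL {Fq : Type} [Field Fq] (f : Polynomial Fq) : LaurentSeries Fq :=
  Polynomial.aeval (tElem Fq) f

/-- The norm on `F_q((1/t))`: `|x| = q^j` where `j` is the largest index with `x_j ≠ 0`
(in `t`-coefficients, so `j = -(order of the Hahn series)`), and `|0| = 0`. -/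
noncomputable def nrm {Fq : Type} [Field Fq] [Fintype Fq] (x : LaurentSeries Fq) : ℝ :=
  if x = 0 then 0 else (Fintype.card Fq : ℝ) ^ (-(HahnSeries.order x))

/-- `𝕋 = {∑_{i<0} x_i t^i}`: Laurent series supported on negative powers of `t`. -/
def TT (Fq : Type) [Field Fq] : Set (LaurentSeries Fq) :=
  {x | ∀ n : ℤ, n ≤ 0 → x.coeff n = 0}

/-- The exponential `e_q(x) = ψ(x_{-1})`, where `ψ(y) = e^{2πi·tr(y)/p}` with
`tr : F_q → F_p` the field trace, and `x_{-1}` is the coefficient of `t^{-1}` in `x`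
(the coefficient of `X^1` of the Hahn series). -/
noncomputable def eQ {Fq : Type} [Field Fq] [Fintype Fq] (p : ℕ) [CharP Fq p]
    (x : LaurentSeries Fq) : ℂ :=
  letI := ZMod.algebra Fq p
  Complex.exp (2 * Real.pi * Complex.I *
    (((Algebra.trace (ZMod p) Fq (x.coeff 1)).val : ℂ) / (p : ℂ)))

/-- The Möbius function on `F_q[t]`: `μ(f) = (-1)^r` if `f` is a product of `r` distinct
irreducibles, and `μ(f) = 0` otherwise. -/
noncomputable def mu {Fq : Type} [Field Fq] (f : Polynomial Fq) : ℤ :=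
  if Squarefree f then
    (-1) ^ Multiset.card (UniqueFactorizationMonoid.normalizedFactors f)
  else 0

/-- The monic polynomial `X^n + ∑_{i<n} c_i X^i`; monic polynomials of degree `n`
are exactly the `stdPoly n c` for a unique `c : Fin n → Fq`. -/
noncomputable def stdPoly {Fq : Type} [Field Fq] (n : ℕ) (c : Fin n → Fq) : Polynomial Fq :=
  X ^ n + ∑ i : Fin n, C (c i) * X ^ (i : ℕ)

/-- The polynomial `∑_{i<k} c_i X^i` of degree `< k`. -/
noncomputable def ltPoly {Fq : Type} [Field Fq] (k : ℕ) (c : Fin k → Fq) : Polynomial Fq :=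
  ∑ i : Fin k, C (c i) * X ^ (i : ℕ)

/-- Hayes' relation `R_{s,g}` on monic polynomials:
`a ≡ b mod R_{s,g}` iff `g ∣ a - b` and `|a/t^{deg a} - b/t^{deg b}| < q^{-s}`.
(Here `1/t^{deg a}` is the Laurent series `X^{deg a}`.) -/
def Requiv {Fq : Type} [Field Fq] [Fintype Fq] (s : ℕ) (g a b : Polynomial Fq) : Prop :=
  g ∣ (a - b) ∧
  nrm (toL a * HahnSeries.single (a.natDegree : ℤ) 1 -
        toL b * HahnSeries.single (b.natDegree : ℤ) 1)
    < (Fintype.card Fq : ℝ) ^ (-(s : ℤ))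

/-- `φ(g)`: the number of invertible residue classes modulo `g`. -/
noncomputable def phi {Fq : Type} [Field Fq] (g : Polynomial Fq) : ℕ :=
  Nat.card ((Polynomial Fq ⧸ Ideal.span {g})ˣ)

/-- `χ` is (the extension by zero of) a character of the unit group `R*_{s,g}` of the quotient
monoid of monic polynomials modulo `R_{s,g}`: it vanishes off monic polynomials, it is
multiplicative on monic polynomials, it is constant on `R_{s,g}`-classes, and it vanishes at a
monic polynomial exactly when that polynomial is not coprime to `g`.  (Such functions correspond
bijectively to the characters of the finite abelian group `R*_{s,g}`.) -/
def IsRChar {Fq : Type} [Field Fq] [Fintype Fq] (s : ℕ) (g : Polynomial Fq)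
    (χ : Polynomial Fq → ℂ) : Prop :=
  (∀ f : Polynomial Fq, ¬ f.Monic → χ f = 0) ∧
  (∀ a b : Polynomial Fq, a.Monic → b.Monic → χ (a * b) = χ a * χ b) ∧
  (∀ a b : Polynomial Fq, a.Monic → b.Monic → Requiv s g a b → χ a = χ b) ∧
  (∀ f : Polynomial Fq, f.Monic → (χ f = 0 ↔ ¬ IsCoprime f g))

/-!
Let `S` be a finite set of monic irreducible polynomials and let `M_S(u)` be the generating series
of `μ(f) u^{deg f}` over the monic `f` divisible by no element of `S`. Sorting monic polynomials by
divisibility by `ω ∉ S` gives `M_{S ∪ {ω}}(u) (1 - u^{deg ω}) = M_S(u)`, and the same sorting of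
the zeta series `Z_S(u)`, in which `μ` is replaced by `1`, gives
`Z_{S ∪ {ω}}(u) = Z_S(u) (1 - u^{deg ω})`. Hence `M_S Z_S` does not depend on `S`; taking for `S`
all monic irreducibles of degree at most `n` shows that it is `1` up to degree `n`. As
`Z_∅(u) = 1 / (1 - q u)`, it follows that
`M_S(u) = (1 - q u) / ∏_{ω ∈ S} (1 - u^{deg ω})`, and the coefficients of this series are
bounded in absolute value by those of `(1 + q u) / (1 - u)^{#S}`.
-/

open UniqueFactorizationMonoid (normalizedFactors primeFactors)
open scoped PowerSeries

section Majorant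

variable {R : Type*} [CommRing R] [LinearOrder R] [IsOrderedAddMonoid R]

theorem abs_coeff_le_coeff_mul_mk_one {F B : R⟦X⟧} {d : ℕ} (hd : 0 < d)
    (hFB : ∀ n, |(F * (1 - PowerSeries.X ^ d)).coeff n| ≤ B.coeff n) (n : ℕ) :
    |F.coeff n| ≤ (B * PowerSeries.mk 1).coeff n := by
  have coeff_partial_sum (k : ℕ) :
      (B * PowerSeries.mk 1).coeff k = ∑ i ∈ Finset.range (k + 1), B.coeff i := by
    simp [PowerSeries.coeff_mul, Finset.Nat.sum_antidiagonal_eq_sum_range_succ_mk]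
  have B_nonneg (k : ℕ) : 0 ≤ B.coeff k := (abs_nonneg _).trans (hFB k)
  induction n using Nat.strong_induction_on with
  | _ n ih =>
    set D := (F * (1 - PowerSeries.X ^ d)).coeff n with hD
    have coeff_F : F.coeff n = (if d ≤ n then F.coeff (n - d) else 0) + D := by
      rw [hD, mul_sub, mul_one, map_sub, PowerSeries.coeff_mul_X_pow']
      ring
    have earlier_le : |if d ≤ n then F.coeff (n - d) else 0| ≤
        ∑ i ∈ Finset.range n, B.coeff i := by
      split_ifs with hdn
      · calc |F.coeff (n - d)|
          _ ≤ ∑ i ∈ Finset.range (n - d + 1), B.coeff i :=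
            (ih (n - d) (by lia)).trans_eq (coeff_partial_sum _)
          _ ≤ ∑ i ∈ Finset.range n, B.coeff i :=
            Finset.sum_le_sum_of_subset_of_nonneg (Finset.range_subset_range.2 (by lia))
              fun i _ _ ↦ B_nonneg i
      · simpa using Finset.sum_nonneg fun i _ ↦ B_nonneg i
    rw [coeff_partial_sum, Finset.sum_range_succ, coeff_F]
    exact (abs_add_le _ _).trans (add_le_add earlier_le (hFB n))

theorem abs_coeff_le_coeff_mul_invOneSubPow {ι : Type*} {s : Finset ι} {d : ι → ℕ}
    (hd : ∀ i ∈ s, 0 < d i) {F B : R⟦X⟧}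
    (hFB : ∀ n, |(F * ∏ i ∈ s, (1 - PowerSeries.X ^ d i)).coeff n| ≤ B.coeff n) (n : ℕ) :
    |F.coeff n| ≤ (B * (PowerSeries.invOneSubPow R s.card).val).coeff n := by
  induction s using Finset.induction_on generalizing F n with
  | empty => simpa [PowerSeries.invOneSubPow_zero] using hFB n
  | insert a s ha ih =>
    have invOneSubPow_one : (PowerSeries.invOneSubPow R 1).val = PowerSeries.mk 1 := by
      ext; simp [PowerSeries.invOneSubPow]
    rw [Finset.card_insert_of_notMem ha, PowerSeries.invOneSubPow_add, Units.val_mul, ← mul_assoc,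
      invOneSubPow_one]
    refine abs_coeff_le_coeff_mul_mk_one (hd a (Finset.mem_insert_self a s)) (ih ?_ ?_) n
    · exact fun i hi ↦ hd i (Finset.mem_insert_of_mem hi)
    · simpa only [Finset.prod_insert ha, mul_assoc] using hFB

end Majorant

theorem coeff_one_add_mul_invOneSubPow_le {n : ℕ} (hn : 2 ≤ n) (q r : ℕ) :
    ((1 + PowerSeries.C (q : ℤ) * PowerSeries.X) * (PowerSeries.invOneSubPow ℤ r).val).coeff n ≤
      ((q : ℤ) + 1) * (n + r - 1).choose n := by
  obtain ⟨m, rfl⟩ : ∃ m, n = m + 1 := ⟨n - 1, by lia⟩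
  rw [add_mul, one_mul, map_add, mul_assoc, PowerSeries.coeff_C_mul,
    PowerSeries.coeff_succ_X_mul]
  rcases r with _ | r
  · simp [PowerSeries.invOneSubPow_zero, PowerSeries.coeff_one, show m ≠ 0 by lia]
  · have choose_le : (r + m).choose r ≤ (r + (m + 1)).choose r :=
      Nat.choose_le_choose r (by lia)
    have choose_symm : (m + 1 + (r + 1) - 1).choose (m + 1) = (r + (m + 1)).choose r := by
      rw [show m + 1 + (r + 1) - 1 = r + (m + 1) by lia, Nat.choose_symm_add]
    rw [PowerSeries.invOneSubPow_val_succ_eq_mk_add_choose, PowerSeries.coeff_mk,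
      PowerSeries.coeff_mk, choose_symm]
    have sum_le : (r + (m + 1)).choose r + q * (r + m).choose r ≤
        (q + 1) * (r + (m + 1)).choose r := by
      rw [add_mul, one_mul, add_comm]
      gcongr
    exact_mod_cast sum_le

theorem isCoprime_iff_forall_mem_primeFactors_not_dvd {R : Type*} [CommRing R] [IsDomain R]
    [IsPrincipalIdealRing R] [NormalizationMonoid R] {a b : R} (hb : b ≠ 0) :
    IsCoprime a b ↔ ∀ p ∈ primeFactors b, ¬ p ∣ a := by
  simp only [UniqueFactorizationMonoid.mem_primeFactors]
  constructor
  · intro hab p hp hpa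
    exact (UniqueFactorizationMonoid.irreducible_of_normalized_factor p hp).not_isUnit
      (hab.isUnit_of_dvd' hpa (UniqueFactorizationMonoid.dvd_of_mem_normalizedFactors hp))
  · intro h
    refine isCoprime_of_irreducible_dvd (fun h0 ↦ hb h0.2) fun z hz hza hzb ↦ ?_
    obtain ⟨p, hp, hzp⟩ :=
      UniqueFactorizationMonoid.exists_mem_normalizedFactors_of_dvd hb hz hzb
    exact h p hp (hzp.symm.dvd.trans hza)

section Field

variable {Fq : Type} [Field Fq]

theorem pairwise_isCoprime_of_monic_irreducible {S : Set Fq[X]}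
    (hS : ∀ p ∈ S, p.Monic ∧ Irreducible p) : S.Pairwise IsCoprime := by
  intro p hp q hq hpq
  refine (hS p hp).2.coprime_iff_not_dvd.2 fun hdvd ↦ hpq ?_
  exact eq_of_monic_of_associated (hS p hp).1 (hS q hq).1
    ((hS p hp).2.associated_of_dvd (hS q hq).2 hdvd)

theorem mu_one : mu (1 : Fq[X]) = 1 := by
  simp [mu]

theorem mu_irreducible_mul {ω : Fq[X]} (hω : Irreducible ω) (f : Fq[X]) :
    mu (ω * f) = if ω ∣ f then 0 else -mu f := by
  split_ifs with hdvd
  · exact if_neg fun hsq ↦ hω.not_isUnit (hsq ω (mul_dvd_mul_left ω hdvd))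
  · have hf : f ≠ 0 := fun hf ↦ hdvd (hf ▸ dvd_zero ω)
    have squarefree_iff : Squarefree (ω * f) ↔ Squarefree f := by
      simp [squarefree_mul_iff, hω.isRelPrime_iff_not_dvd.2 hdvd, hω.squarefree]
    have card_factors : (normalizedFactors (ω * f)).card = (normalizedFactors f).card + 1 := by
      simp [UniqueFactorizationMonoid.normalizedFactors_mul hω.ne_zero hf,
        UniqueFactorizationMonoid.normalizedFactors_irreducible hω, add_comm]
    simp only [mu, squarefree_iff, card_factors, pow_succ, mul_neg_one]
    split_ifs <;> simp

variable {n : ℕ}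

theorem monic_stdPoly (c : Fin n → Fq) : (stdPoly n c).Monic :=
  monic_X_pow_add (degree_sum_fin_lt c)

theorem natDegree_stdPoly (c : Fin n → Fq) : (stdPoly n c).natDegree = n := by
  refine natDegree_eq_of_degree_eq_some ?_
  rw [stdPoly, degree_add_eq_left_of_degree_lt] <;> rw [degree_X_pow]
  exact degree_sum_fin_lt c

theorem coeff_stdPoly (c : Fin n → Fq) (i : Fin n) : (stdPoly n c).coeff i = c i := by
  simp [stdPoly, coeff_X_pow, i.2.ne, Fin.val_inj]

theorem stdPoly_injective : Function.Injective (stdPoly (Fq := Fq) n) := by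
  intro c d hcd
  ext i
  rw [← coeff_stdPoly c i, hcd, coeff_stdPoly]

theorem exists_stdPoly_eq_iff {f : Fq[X]} :
    (∃ c, stdPoly n c = f) ↔ f.Monic ∧ f.natDegree = n := by
  constructor
  · rintro ⟨c, rfl⟩
    exact ⟨monic_stdPoly c, natDegree_stdPoly c⟩
  · rintro ⟨hf, rfl⟩
    refine ⟨fun i ↦ f.coeff i, ?_⟩
    conv_rhs => rw [hf.as_sum, Finset.sum_range]
    rfl

end Field

section Sieve

variable {Fq : Type} [Field Fq] [Fintype Fq]

variable (Fq) in
/-- The finite set of monic polynomials of degree `n` over `F_q`. -/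
noncomputable def monicsOfDegree (n : ℕ) : Finset Fq[X] :=
  Finset.univ.map ⟨stdPoly n, stdPoly_injective⟩

/-- The monic polynomials of degree `n` that survive sieving by `S`, i.e. that are divisible by no
element of `S`. -/
noncomputable def siftedMonics (S : Finset Fq[X]) (n : ℕ) : Finset Fq[X] :=
  {f ∈ monicsOfDegree Fq n | ∀ p ∈ S, ¬ p ∣ f}

/-- The generating series `∑ h(f) u^{deg f}` over the monic polynomials `f` divisible by no element
of `S`. It is the series `M_S` for `h = μ` and `Z_S` for `h = 1`. -/
noncomputable def siftedSeries {R : Type*} [Semiring R] (h : Fq[X] → R) (S : Finset Fq[X]) : R⟦X⟧ :=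
  PowerSeries.mk fun n ↦ ∑ f ∈ siftedMonics S n, h f

variable {S : Finset Fq[X]} {ω f : Fq[X]} {n : ℕ}

theorem mem_monicsOfDegree : f ∈ monicsOfDegree Fq n ↔ f.Monic ∧ f.natDegree = n := by
  simp [monicsOfDegree, ← exists_stdPoly_eq_iff]

theorem card_monicsOfDegree : (monicsOfDegree Fq n).card = Fintype.card Fq ^ n := by
  simp [monicsOfDegree]

theorem mem_siftedMonics :
    f ∈ siftedMonics S n ↔ (f.Monic ∧ f.natDegree = n) ∧ ∀ p ∈ S, ¬ p ∣ f := by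
  simp [siftedMonics, mem_monicsOfDegree]

theorem siftedMonics_empty : siftedMonics ∅ n = monicsOfDegree Fq n := by
  simp [siftedMonics]

theorem siftedMonics_insert :
    siftedMonics (insert ω S) n = {f ∈ siftedMonics S n | ¬ ω ∣ f} := by
  ext f
  simp only [mem_siftedMonics, Finset.mem_filter, Finset.forall_mem_insert]
  tauto

theorem siftedMonics_zero (hS : ∀ p ∈ S, ¬ IsUnit p) : siftedMonics S 0 = {1} := by
  ext f
  rw [mem_siftedMonics, Finset.mem_singleton]
  constructor
  · rintro ⟨⟨hf, hdeg⟩, -⟩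
    exact hf.natDegree_eq_zero.1 hdeg
  · rintro rfl
    exact ⟨⟨monic_one, natDegree_one⟩, fun p hp hp1 ↦ hS p hp (isUnit_of_dvd_one hp1)⟩

theorem siftedMonics_eq_empty (hn : n ≠ 0)
    (hS : ∀ p : Fq[X], p.Monic → Irreducible p → p.natDegree ≤ n → p ∈ S) :
    siftedMonics S n = ∅ := by
  refine Finset.eq_empty_of_forall_notMem fun f hf ↦ ?_
  obtain ⟨⟨hmonic, hdeg⟩, hnot_dvd⟩ := mem_siftedMonics.1 hf
  have not_isUnit_f : ¬ IsUnit f := fun hu ↦ hn (hdeg ▸ natDegree_eq_zero_of_isUnit hu)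
  obtain ⟨p, hp_monic, hp_irr, hpf⟩ := exists_monic_irreducible_factor f not_isUnit_f
  exact hnot_dvd p (hS p hp_monic hp_irr (hdeg ▸ natDegree_le_of_dvd hpf hmonic.ne_zero)) hpf

theorem mul_mem_siftedMonics_iff (hω : ω.Monic) (hS : ∀ p ∈ S, IsCoprime p ω) :
    ω * f ∈ siftedMonics S (ω.natDegree + n) ↔ f ∈ siftedMonics S n := by
  have monic_iff : (ω * f).Monic ↔ f.Monic := ⟨hω.of_mul_monic_left, hω.mul⟩
  have dvd_iff : ∀ p ∈ S, (p ∣ ω * f ↔ p ∣ f) :=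
    fun p hp ↦ ⟨(hS p hp).dvd_of_dvd_mul_left, (Dvd.dvd.mul_left · ω)⟩
  rw [mem_siftedMonics, mem_siftedMonics, monic_iff,
    forall₂_congr fun p hp ↦ not_congr (dvd_iff p hp)]
  refine and_congr_left fun _ ↦ and_congr_right fun hf ↦ ?_
  rw [hω.natDegree_mul hf, Nat.add_left_cancel_iff]

theorem sum_siftedMonics_dvd {M : Type*} [AddCommMonoid M] (h : Fq[X] → M) (hω : ω.Monic)
    (hS : ∀ p ∈ S, IsCoprime p ω) (n : ℕ) :
    ∑ f ∈ siftedMonics S n with ω ∣ f, h f =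
      if ω.natDegree ≤ n then ∑ f ∈ siftedMonics S (n - ω.natDegree), h (ω * f) else 0 := by
  split_ifs with hn
  · obtain ⟨m, rfl⟩ := Nat.exists_eq_add_of_le hn
    rw [Nat.add_sub_cancel_left]
    symm
    refine Finset.sum_nbij (ω * ·) ?_ (mul_right_injective₀ hω.ne_zero).injOn ?_ fun _ _ ↦ rfl
    · exact fun f hf ↦ Finset.mem_filter.2
        ⟨(mul_mem_siftedMonics_iff hω hS).2 hf, dvd_mul_right ω f⟩
    · intro f hf
      obtain ⟨hf_mem, k, rfl⟩ := Finset.mem_filter.1 hf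
      exact ⟨k, (mul_mem_siftedMonics_iff hω hS).1 hf_mem, rfl⟩
  · refine Finset.sum_eq_zero fun f hf ↦ absurd ?_ hn
    obtain ⟨hf_mem, hωf⟩ := Finset.mem_filter.1 hf
    obtain ⟨⟨hmonic, rfl⟩, -⟩ := mem_siftedMonics.1 hf_mem
    exact natDegree_le_of_dvd hωf hmonic.ne_zero

section Semiring

variable {R : Type*} [Semiring R]

theorem coeff_siftedSeries (h : Fq[X] → R) (S : Finset Fq[X]) (n : ℕ) :
    (siftedSeries h S).coeff n = ∑ f ∈ siftedMonics S n, h f :=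
  PowerSeries.coeff_mk _ _

theorem siftedSeries_eq_insert_add (h : Fq[X] → R) (hω : ω.Monic)
    (hS : ∀ p ∈ S, IsCoprime p ω) :
    siftedSeries h S = siftedSeries h (insert ω S) +
      PowerSeries.X ^ ω.natDegree * siftedSeries (fun f ↦ h (ω * f)) S := by
  ext n
  simp only [map_add, PowerSeries.coeff_X_pow_mul', coeff_siftedSeries]
  rw [← sum_siftedMonics_dvd h hω hS, siftedMonics_insert, add_comm,
    Finset.sum_filter_add_sum_filter_not]

theorem trunc_siftedSeries (h : Fq[X] → R) (hunit : ∀ p ∈ S, ¬ IsUnit p)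
    (hS : ∀ p : Fq[X], p.Monic → Irreducible p → p.natDegree ≤ n → p ∈ S) :
    (siftedSeries h S).trunc (n + 1) = C (h 1) := by
  ext k
  rw [PowerSeries.coeff_trunc, coeff_C, coeff_siftedSeries]
  rcases eq_or_ne k 0 with rfl | hk
  · simp [siftedMonics_zero hunit]
  · rw [if_neg hk]
    refine ite_eq_right_iff.2 fun hkn ↦ ?_
    rw [siftedMonics_eq_empty hk fun p hp_monic hp_irr hpk ↦ hS p hp_monic hp_irr (by lia),
      Finset.sum_empty]

end Semiring

section Zeta

variable {R : Type*} [CommRing R]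

theorem siftedSeries_one_mul_one_sub_X_pow (hω : ω.Monic) (hS : ∀ p ∈ S, IsCoprime p ω) :
    siftedSeries (1 : Fq[X] → R) S * (1 - PowerSeries.X ^ ω.natDegree) =
      siftedSeries 1 (insert ω S) := by
  rw [mul_sub, mul_one, mul_comm, sub_eq_iff_eq_add]
  exact siftedSeries_eq_insert_add 1 hω hS

theorem siftedSeries_one_mul_prod (hmonic : ∀ p ∈ S, p.Monic)
    (hcoprime : (S : Set Fq[X]).Pairwise IsCoprime) :
    siftedSeries (1 : Fq[X] → R) ∅ * ∏ p ∈ S, (1 - PowerSeries.X ^ p.natDegree) =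
      siftedSeries 1 S := by
  induction S using Finset.induction_on with
  | empty => simp
  | insert ω S hω ih =>
    rw [Finset.forall_mem_insert] at hmonic
    rw [Finset.coe_insert, Set.pairwise_insert_of_notMem (Finset.mem_coe.not.2 hω)] at hcoprime
    rw [Finset.prod_insert hω, mul_left_comm, ih hmonic.2 hcoprime.1, mul_comm,
      siftedSeries_one_mul_one_sub_X_pow hmonic.1 fun p hp ↦ (hcoprime.2 p hp).2]

theorem siftedSeries_one_empty_mul :
    siftedSeries (1 : Fq[X] → R) ∅ *
      (1 - PowerSeries.C (Fintype.card Fq : R) * PowerSeries.X) = 1 := by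
  ext n
  rw [mul_sub, mul_one, mul_left_comm, map_sub, PowerSeries.coeff_C_mul, PowerSeries.coeff_one]
  cases n with
  | zero => simp [coeff_siftedSeries, siftedMonics_empty, card_monicsOfDegree]
  | succ n => simp [coeff_siftedSeries, siftedMonics_empty, card_monicsOfDegree, pow_succ']

end Zeta

theorem siftedSeries_mu_mul_one_sub_X_pow (hω : ω.Monic) (hω_irr : Irreducible ω)
    (hS : ∀ p ∈ S, IsCoprime p ω) :
    siftedSeries mu (insert ω S) * (1 - PowerSeries.X ^ ω.natDegree) = siftedSeries mu S := by
  have mu_mul : siftedSeries (fun f ↦ mu (ω * f)) S = -siftedSeries mu (insert ω S) := by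
    ext n
    simp only [map_neg, coeff_siftedSeries, siftedMonics_insert, mu_irreducible_mul hω_irr,
      Finset.sum_filter, ← Finset.sum_neg_distrib, ite_not, neg_ite, neg_zero]
  rw [siftedSeries_eq_insert_add mu hω hS, mu_mul]
  ring

theorem siftedSeries_mu_mul_prod (hS : ∀ p ∈ S, p.Monic ∧ Irreducible p) :
    siftedSeries mu S * ∏ p ∈ S, (1 - PowerSeries.X ^ p.natDegree) =
      siftedSeries (mu (Fq := Fq)) ∅ := by
  have hcoprime := pairwise_isCoprime_of_monic_irreducible (S := (S : Set Fq[X])) hS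
  induction S using Finset.induction_on with
  | empty => simp
  | insert ω S hω ih =>
    rw [Finset.forall_mem_insert] at hS
    rw [Finset.coe_insert, Set.pairwise_insert_of_notMem (Finset.mem_coe.not.2 hω)] at hcoprime
    rw [Finset.prod_insert hω, ← mul_assoc,
      siftedSeries_mu_mul_one_sub_X_pow hS.1.1 hS.1.2 fun p hp ↦ (hcoprime.2 p hp).2,
      ih hS.2 hcoprime.1]

theorem siftedSeries_mu_mul_siftedSeries_one :
    siftedSeries (mu (Fq := Fq)) ∅ * siftedSeries (1 : Fq[X] → ℤ) ∅ = 1 := by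
  ext n
  let S : Finset Fq[X] := {p ∈ (Finset.range (n + 1)).biUnion (monicsOfDegree Fq) | Irreducible p}
  have mem_S (p : Fq[X]) : p ∈ S ↔ (p.Monic ∧ Irreducible p) ∧ p.natDegree ≤ n := by
    simp only [S, Finset.mem_filter, Finset.mem_biUnion, Finset.mem_range, mem_monicsOfDegree]
    grind
  have hS (p : Fq[X]) (hp : p ∈ S) : p.Monic ∧ Irreducible p := ((mem_S p).1 hp).1
  have S_not_isUnit (p : Fq[X]) (hp : p ∈ S) : ¬ IsUnit p := (hS p hp).2.not_isUnit
  have S_complete (p : Fq[X]) (hp_monic : p.Monic) (hp_irr : Irreducible p)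
      (hpn : p.natDegree ≤ n) : p ∈ S := (mem_S p).2 ⟨⟨hp_monic, hp_irr⟩, hpn⟩
  have product_eq : siftedSeries (mu (Fq := Fq)) ∅ * siftedSeries (1 : Fq[X] → ℤ) ∅ =
      siftedSeries mu S * siftedSeries 1 S := by
    rw [← siftedSeries_mu_mul_prod hS, ← siftedSeries_one_mul_prod (fun p hp ↦ (hS p hp).1)
      (pairwise_isCoprime_of_monic_irreducible hS)]
    ring
  rw [product_eq, PowerSeries.coeff_mul_eq_coeff_trunc_mul_trunc _ _ n.lt_succ_self,
    trunc_siftedSeries mu S_not_isUnit S_complete, trunc_siftedSeries 1 S_not_isUnit S_complete,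
    mu_one]
  simp [PowerSeries.coeff_one]

theorem siftedSeries_mu_empty :
    siftedSeries (mu (Fq := Fq)) ∅ =
      1 - PowerSeries.C (Fintype.card Fq : ℤ) * PowerSeries.X :=
  left_inv_eq_right_inv siftedSeries_mu_mul_siftedSeries_one siftedSeries_one_empty_mul

theorem abs_coeff_siftedSeries_mu_le (hS : ∀ p ∈ S, p.Monic ∧ Irreducible p) (n : ℕ) :
    |(siftedSeries mu S).coeff n| ≤
      ((1 + PowerSeries.C (Fintype.card Fq : ℤ) * PowerSeries.X) *
        (PowerSeries.invOneSubPow ℤ S.card).val).coeff n := by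
  refine abs_coeff_le_coeff_mul_invOneSubPow (fun p hp ↦ (hS p hp).2.natDegree_pos) (fun k ↦ ?_) n
  rw [siftedSeries_mu_mul_prod hS, siftedSeries_mu_empty, map_sub, map_add]
  have coeff_one_nonneg : 0 ≤ (1 : ℤ⟦X⟧).coeff k := by
    rw [PowerSeries.coeff_one]
    positivity
  have coeff_C_mul_X_nonneg :
      0 ≤ (PowerSeries.C (Fintype.card Fq : ℤ) * PowerSeries.X).coeff k := by
    rw [PowerSeries.coeff_C_mul, PowerSeries.coeff_X]
    positivity
  exact abs_sub_le_of_nonneg_of_le coeff_one_nonneg (le_add_of_nonneg_right coeff_C_mul_X_nonneg)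
    coeff_C_mul_X_nonneg (le_add_of_nonneg_left coeff_one_nonneg)

theorem sum_stdPoly_isCoprime_eq_coeff_siftedSeries {R : Type*} [Semiring R] (h : Fq[X] → R)
    {g : Fq[X]} (hg : g ≠ 0) (n : ℕ) :
    (∑ c : Fin n → Fq, if IsCoprime (stdPoly n c) g then h (stdPoly n c) else 0) =
      (siftedSeries h (primeFactors g)).coeff n := by
  rw [coeff_siftedSeries, siftedMonics, Finset.sum_filter, monicsOfDegree, Finset.sum_map]
  simp [isCoprime_iff_forall_mem_primeFactors_not_dvd hg]

end Sieve

/-- For `n ≥ 2` and `g ≠ 0` with exactly `r` distinct monic irreducible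
divisors, `|∑_{f monic, deg f = n, (f,g)=1} μ(f)| ≤ (q+1)·C(n+r-1, n)`. -/
theorem mobius_trivial_character_sum_bound
    (Fq : Type) [Field Fq] [Fintype Fq] (n : ℕ) (hn : 2 ≤ n)
    (g : Polynomial Fq) (hg : g ≠ 0) (r : ℕ)
    (hr : r = Nat.card {ω : Polynomial Fq // ω.Monic ∧ Irreducible ω ∧ ω ∣ g}) :
    |∑ c : Fin n → Fq, if IsCoprime (stdPoly n c) g then mu (stdPoly n c) else 0|
      ≤ ((Fintype.card Fq : ℤ) + 1) * Nat.choose (n + r - 1) n := by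
  have mem_primeFactors_iff (p : Fq[X]) : p ∈ primeFactors g ↔ p.Monic ∧ Irreducible p ∧ p ∣ g := by
    rw [UniqueFactorizationMonoid.mem_primeFactors, Polynomial.mem_normalizedFactors_iff hg]
    tauto
  have r_eq : r = (primeFactors g).card := by
    rw [hr, Nat.subtype_card _ mem_primeFactors_iff]
  rw [sum_stdPoly_isCoprime_eq_coeff_siftedSeries mu hg, r_eq]
  calc |(siftedSeries mu (primeFactors g)).coeff n|
    _ ≤ ((1 + PowerSeries.C (Fintype.card Fq : ℤ) * PowerSeries.X) *
          (PowerSeries.invOneSubPow ℤ (primeFactors g).card).val).coeff n :=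
      abs_coeff_siftedSeries_mu_le
        (fun p hp ↦ ((mem_primeFactors_iff p).1 hp).imp_right And.left) n
    _ ≤ (Fintype.card Fq + 1) * (n + (primeFactors g).card - 1).choose n :=
      coeff_one_add_mul_invOneSubPow_le hn _ _
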